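/- arXiv:1503.03947 — 3 statements merged into one kernel-verified Lean document; each statement's English description precedes it below -/
import Mathlib

section
/- Two frames {φ_i}_{i=1}^∞ and {ψ_i}_{i=1}^∞ for a separable Hilbert space H are woven if and only if they are weakly woven; that is, if for every σ ⊆ ℕ the family {φ_i}_{i∈σ} ∪ {ψ_i}_{i∈σ^c} is a frame for H, then there exist universal constants 0 < A ≤ B such that every such weaving is a frame with bounds A and B. -/
open scoped RealInnerProductSpace BigOperators Classical

open Topology Filter

section helpers

variable {H : Type*} [NormedAddCommGroup H] [InnerProductSpace ℝ H]

/-- The weaving chosen by a Boolean sequence. -/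
noncomputable def wv (φ ψ : ℕ → H) (s : ℕ → Bool) (i : ℕ) : H := if s i then φ i else ψ i

theorem wv_sq_le (φ ψ : ℕ → H) (s : ℕ → Bool) (x : H) (i : ℕ) :
    ⟪x, wv φ ψ s i⟫ ^ 2 ≤ ⟪x, φ i⟫ ^ 2 + ⟪x, ψ i⟫ ^ 2 := by
  unfold wv
  split_ifs
  · nlinarith [sq_nonneg ⟪x, ψ i⟫]
  · nlinarith [sq_nonneg ⟪x, φ i⟫]

theorem summable_of_lower (φ : ℕ → H) (A : ℝ) (hA : 0 < A) (x : H)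
    (h : A * ‖x‖ ^ 2 ≤ ∑' i : ℕ, ⟪x, φ i⟫ ^ 2) : Summable (fun i => ⟪x, φ i⟫ ^ 2) := by
  by_contra hn
  rw [tsum_eq_zero_of_not_summable hn] at h
  have : x = 0 := by
    by_contra hx
    have : 0 < ‖x‖ := norm_pos_iff.mpr hx
    have : 0 < A * ‖x‖ ^ 2 := by positivity
    linarith
  subst this
  exact hn (by simpa using summable_zero)

theorem wv_summable (φ ψ : ℕ → H) (hφ : ∀ x : H, Summable (fun i => ⟪x, φ i⟫ ^ 2))
    (hψ : ∀ x : H, Summable (fun i => ⟪x, ψ i⟫ ^ 2)) (s : ℕ → Bool) (x : H) :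
    Summable (fun i => ⟪x, wv φ ψ s i⟫ ^ 2) :=
  Summable.of_nonneg_of_le (fun i => sq_nonneg _) (wv_sq_le φ ψ s x) ((hφ x).add (hψ x))

theorem baire_step (φ ψ : ℕ → H) (hφ : ∀ x : H, Summable (fun i => ⟪x, φ i⟫ ^ 2))
    (hψ : ∀ x : H, Summable (fun i => ⟪x, ψ i⟫ ^ 2))
    (h : ∀ s : ℕ → Bool, ∃ A : ℝ, 0 < A ∧ ∀ x : H,
      A * ‖x‖ ^ 2 ≤ ∑' i : ℕ, ⟪x, wv φ ψ s i⟫ ^ 2) :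
    ∃ (I : Finset ℕ) (t : ℕ → Bool) (c : ℝ), 0 < c ∧ ∀ s : ℕ → Bool, (∀ i ∈ I, s i = t i) →
      ∀ x : H, c * ‖x‖ ^ 2 ≤ ∑' i : ℕ, ⟪x, wv φ ψ s i⟫ ^ 2 := by
  have hcont : ∀ x : H, Continuous (fun s : ℕ → Bool => ∑' i : ℕ, ⟪x, wv φ ψ s i⟫ ^ 2) := by
    intro x
    refine continuous_tsum (u := fun i => ⟪x, φ i⟫ ^ 2 + ⟪x, ψ i⟫ ^ 2) ?_ ((hφ x).add (hψ x)) ?_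
    · intro i
      have : (fun s : ℕ → Bool => ⟪x, wv φ ψ s i⟫ ^ 2) =
          (fun b : Bool => ⟪x, if b then φ i else ψ i⟫ ^ 2) ∘ (fun s : ℕ → Bool => s i) := rfl
      rw [this]
      exact continuous_of_discreteTopology.comp (continuous_apply i)
    · intro i s
      rw [Real.norm_of_nonneg (sq_nonneg _)]
      exact wv_sq_le φ ψ s x i
  obtain ⟨n, t, ht⟩ := nonempty_interior_of_iUnion_of_closed
    (f := fun n : ℕ => {s : ℕ → Bool | ∀ x : H,
      (1 / ((n : ℝ) + 1)) * ‖x‖ ^ 2 ≤ ∑' i : ℕ, ⟪x, wv φ ψ s i⟫ ^ 2})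
    (by
      intro n
      simp only [Set.ofPred_forall]
      exact isClosed_iInter fun x => isClosed_le continuous_const (hcont x))
    (by
      rw [Set.eq_univ_iff_forall]
      intro s
      obtain ⟨A, hA, hs⟩ := h s
      obtain ⟨n, hn⟩ := exists_nat_one_div_lt hA
      refine Set.mem_iUnion.mpr ⟨n, fun x => le_trans ?_ (hs x)⟩
      gcongr)
  obtain ⟨I, u, hu, hsub⟩ := isOpen_pi_iff.mp isOpen_interior t ht
  refine ⟨I, t, 1 / ((n : ℝ) + 1), by positivity, fun s hs => ?_⟩
  exact interior_subset (hsub (show s ∈ (I : Set ℕ).pi u from fun i hi => by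
    rw [hs i hi]; exact (hu i hi).2))

theorem modify_step (φ ψ : ℕ → H) (hφ : ∀ x : H, Summable (fun i => ⟪x, φ i⟫ ^ 2))
    (hψ : ∀ x : H, Summable (fun i => ⟪x, ψ i⟫ ^ 2))
    (I : Finset ℕ) (t : ℕ → Bool) (c : ℝ)
    (h : ∀ s : ℕ → Bool, (∀ i ∈ I, s i = t i) →
      ∀ x : H, c * ‖x‖ ^ 2 ≤ ∑' i : ℕ, ⟪x, wv φ ψ s i⟫ ^ 2) (s : ℕ → Bool) (x : H) :
    c * ‖x‖ ^ 2 ≤ (∑' i : ℕ, ⟪x, wv φ ψ s i⟫ ^ 2) + ∑ i ∈ I, (⟪x, φ i⟫ ^ 2 + ⟪x, ψ i⟫ ^ 2) := by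
  set s' : ℕ → Bool := fun i => if i ∈ I then t i else s i with hs'
  have h1 := h s' (fun i hi => by simp [hs', hi]) x
  have h2 : HasSum (fun i => if i ∈ I then (⟪x, φ i⟫ ^ 2 + ⟪x, ψ i⟫ ^ 2) else 0)
      (∑ i ∈ I, (⟪x, φ i⟫ ^ 2 + ⟪x, ψ i⟫ ^ 2)) := by
    have := hasSum_sum_of_ne_finset_zero (L := .unconditional ℕ)
      (f := fun i => if i ∈ I then (⟪x, φ i⟫ ^ 2 + ⟪x, ψ i⟫ ^ 2) else 0) (s := I)
      (fun i hi => by simp [hi])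
    rwa [Finset.sum_congr rfl (fun i hi => if_pos hi)] at this
  refine h1.trans (hasSum_le ?_ (wv_summable φ ψ hφ hψ s' x).hasSum
    ((wv_summable φ ψ hφ hψ s x).hasSum.add h2))
  intro i
  by_cases hi : i ∈ I
  · have := wv_sq_le φ ψ s' x i
    simp only [hi, if_true]
    nlinarith [sq_nonneg ⟪x, wv φ ψ s i⟫]
  · have : wv φ ψ s' i = wv φ ψ s i := by simp [wv, hs', hi]
    simp [hi, this]

theorem compact_step [CompleteSpace H] (φ ψ : ℕ → H)
    (hφ : ∀ x : H, Summable (fun i => ⟪x, φ i⟫ ^ 2))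
    (hψ : ∀ x : H, Summable (fun i => ⟪x, ψ i⟫ ^ 2))
    (h : ∀ s : ℕ → Bool, ∃ A : ℝ, 0 < A ∧ ∀ x : H,
      A * ‖x‖ ^ 2 ≤ ∑' i : ℕ, ⟪x, wv φ ψ s i⟫ ^ 2) :
    ∃ A : ℝ, 0 < A ∧ ∀ (s : ℕ → Bool) (x : H),
      A * ‖x‖ ^ 2 ≤ ∑' i : ℕ, ⟪x, wv φ ψ s i⟫ ^ 2 := by
  obtain ⟨I, t, c, hc, hI⟩ := baire_step φ ψ hφ hψ h
  have hP := modify_step φ ψ hφ hψ I t c hI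
  by_contra hcon
  push Not at hcon
  let C : ℕ → Set (WeakDual ℝ H × (ℕ → Bool)) := fun M =>
    {p | p.1 ∈ WeakDual.toStrongDual ⁻¹' Metric.closedBall (0 : StrongDual ℝ H) 1 ∧
      c / 2 ≤ ∑ i ∈ I, ((p.1 (φ i)) ^ 2 + (p.1 (ψ i)) ^ 2) ∧
      ∀ i, i < M → (p.1 (wv φ ψ p.2 i)) ^ 2 ≤ 1 / ((M : ℝ) + 1)}
  have hev : ∀ v : H, Continuous (fun p : WeakDual ℝ H × (ℕ → Bool) => p.1 v) :=
    fun v => (WeakDual.eval_continuous v).comp continuous_fst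
  have hwc : ∀ i, Continuous (fun p : WeakDual ℝ H × (ℕ → Bool) => p.1 (wv φ ψ p.2 i)) := by
    intro i
    have : (fun p : WeakDual ℝ H × (ℕ → Bool) => p.1 (wv φ ψ p.2 i)) =
        fun p => (if p.2 i then (1 : ℝ) else 0) * p.1 (φ i)
          + (if p.2 i then (0 : ℝ) else 1) * p.1 (ψ i) := by
      funext p
      by_cases hp : p.2 i <;> simp [wv, hp]
    rw [this]
    have hb : ∀ a b : ℝ, Continuous
        (fun p : WeakDual ℝ H × (ℕ → Bool) => if p.2 i then a else b) := fun a b =>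
      (continuous_of_discreteTopology (f := fun z : Bool => if z then a else b)).comp
        ((continuous_apply i).comp continuous_snd)
    exact ((hb 1 0).mul (hev _)).add ((hb 0 1).mul (hev _))
  have hclosed : ∀ M, IsClosed (C M) := by
    intro M
    refine IsClosed.and ?_ (IsClosed.and ?_ ?_)
    · exact (WeakDual.isClosed_closedBall (0 : StrongDual ℝ H) 1).preimage continuous_fst
    · exact isClosed_le continuous_const
        (continuous_finsetSum _ fun i _ => ((hev _).pow 2).add ((hev _).pow 2))
    · simp only [Set.ofPred_forall]
      exact isClosed_iInter fun i => isClosed_iInter fun _ =>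
        isClosed_le ((hwc i).pow 2) continuous_const
  have hcomp : IsCompact (C 0) := by
    refine IsCompact.of_isClosed_subset
      ((WeakDual.isCompact_closedBall (0 : StrongDual ℝ H) 1).prod
        (isCompact_univ (X := ℕ → Bool))) (hclosed 0) ?_
    rintro p hp
    exact ⟨hp.1, trivial⟩
  have hmono : ∀ M, C (M + 1) ⊆ C M := by
    rintro M p ⟨h1, h2, h3⟩
    refine ⟨h1, h2, fun i hi => (h3 i (by omega)).trans ?_⟩
    push_cast
    gcongr
    linarith
  have hne : ∀ M, (C M).Nonempty := by
    intro M
    obtain ⟨s, x, hx⟩ := hcon (min (c / 2) (1 / ((M : ℝ) + 1))) (by positivity)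
    have hx0 : x ≠ 0 := by
      rintro rfl
      simp at hx
    have hxn : 0 < ‖x‖ := norm_pos_iff.mpr hx0
    set y : H := ‖x‖⁻¹ • x with hy
    have hyn : ‖y‖ = 1 := by
      rw [hy, norm_smul, norm_inv, norm_norm, inv_mul_cancel₀ hxn.ne']
    have hS : ∑' i : ℕ, ⟪y, wv φ ψ s i⟫ ^ 2 < min (c / 2) (1 / ((M : ℝ) + 1)) := by
      have : ∑' i : ℕ, ⟪y, wv φ ψ s i⟫ ^ 2
          = (‖x‖ ^ 2)⁻¹ * ∑' i : ℕ, ⟪x, wv φ ψ s i⟫ ^ 2 := by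
        rw [← tsum_mul_left]
        congr 1
        funext i
        rw [hy, real_inner_smul_left, mul_pow, inv_pow]
      rw [this, inv_mul_lt_iff₀ (by positivity)]
      linarith
    have hPy := hP s y
    rw [hyn] at hPy
    refine ⟨(StrongDual.toWeakDual (InnerProductSpace.toDual ℝ H y), s), ?_, ?_, ?_⟩
    · simp [hyn]
    · have := hS.trans_le (min_le_left _ _)
      show c / 2 ≤ ∑ i ∈ I, (⟪y, φ i⟫ ^ 2 + ⟪y, ψ i⟫ ^ 2)
      linarith
    · intro i _
      show ⟪y, wv φ ψ s i⟫ ^ 2 ≤ _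
      exact ((wv_summable φ ψ hφ hψ s y).le_tsum i (fun j _ => sq_nonneg _)).trans
        (hS.le.trans (min_le_right _ _))
  obtain ⟨⟨f, s⟩, hp⟩ := IsCompact.nonempty_iInter_of_sequence_nonempty_isCompact_isClosed
    C hmono hne hcomp hclosed
  rw [Set.mem_iInter] at hp
  set x : H := (InnerProductSpace.toDual ℝ H).symm (WeakDual.toStrongDual f) with hx
  have hfx : ∀ v, f v = ⟪x, v⟫ := by
    intro v
    rw [hx, InnerProductSpace.toDual_symm_apply]
    rfl
  have hz : ∀ i, ⟪x, wv φ ψ s i⟫ ^ 2 = 0 := by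
    intro i
    refine le_antisymm ?_ (sq_nonneg _)
    refine ge_of_tendsto tendsto_one_div_add_atTop_nhds_zero_nat ?_
    filter_upwards [eventually_gt_atTop i] with M hM
    have := (hp M).2.2 i hM
    simpa only [hfx] using this
  obtain ⟨A, hA, hs⟩ := h s
  have hx0 := hs x
  simp only [hz, tsum_zero] at hx0
  have hx1 : x = 0 := by
    by_contra hxx
    have : 0 < ‖x‖ := norm_pos_iff.mpr hxx
    have : 0 < A * ‖x‖ ^ 2 := by positivity
    linarith
  have := (hp 0).2.1
  simp only [hfx, hx1, inner_zero_left] at this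
  simp at this
  linarith

end helpers

/-- Two frames for a Hilbert space are woven if and only if they are weakly woven:
if every weaving is a frame, then universal frame bounds exist. -/
theorem stmt_5 {H : Type*} [NormedAddCommGroup H] [InnerProductSpace ℝ H]
    [CompleteSpace H] [TopologicalSpace.SeparableSpace H]
    (φ ψ : ℕ → H)
    (hφ : ∃ A B : ℝ, 0 < A ∧ A ≤ B ∧ ∀ x : H,
      A * ‖x‖ ^ 2 ≤ (∑' i : ℕ, ⟪x, φ i⟫ ^ 2) ∧ (∑' i : ℕ, ⟪x, φ i⟫ ^ 2) ≤ B * ‖x‖ ^ 2)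
    (hψ : ∃ A B : ℝ, 0 < A ∧ A ≤ B ∧ ∀ x : H,
      A * ‖x‖ ^ 2 ≤ (∑' i : ℕ, ⟪x, ψ i⟫ ^ 2) ∧ (∑' i : ℕ, ⟪x, ψ i⟫ ^ 2) ≤ B * ‖x‖ ^ 2) :
    (∃ A B : ℝ, 0 < A ∧ A ≤ B ∧ ∀ σ : Set ℕ, ∀ x : H,
        A * ‖x‖ ^ 2 ≤ (∑' i : ℕ, ⟪x, if i ∈ σ then φ i else ψ i⟫ ^ 2) ∧
        (∑' i : ℕ, ⟪x, if i ∈ σ then φ i else ψ i⟫ ^ 2) ≤ B * ‖x‖ ^ 2) ↔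
      (∀ σ : Set ℕ, ∃ A B : ℝ, 0 < A ∧ A ≤ B ∧ ∀ x : H,
        A * ‖x‖ ^ 2 ≤ (∑' i : ℕ, ⟪x, if i ∈ σ then φ i else ψ i⟫ ^ 2) ∧
        (∑' i : ℕ, ⟪x, if i ∈ σ then φ i else ψ i⟫ ^ 2) ≤ B * ‖x‖ ^ 2) := by
  constructor
  · rintro ⟨A, B, hA, hAB, h⟩ σ
    exact ⟨A, B, hA, hAB, h σ⟩
  · intro h
    obtain ⟨A1, B1, hA1, hAB1, h1⟩ := hφ
    obtain ⟨A2, B2, hA2, hAB2, h2⟩ := hψ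
    have s1 : ∀ x : H, Summable (fun i => ⟪x, φ i⟫ ^ 2) :=
      fun x => summable_of_lower φ A1 hA1 x (h1 x).1
    have s2 : ∀ x : H, Summable (fun i => ⟪x, ψ i⟫ ^ 2) :=
      fun x => summable_of_lower ψ A2 hA2 x (h2 x).1
    obtain ⟨A, hA, hl⟩ := compact_step φ ψ s1 s2 (by
      intro s
      obtain ⟨A, B, hA, -, hs⟩ := h {i | s i = true}
      exact ⟨A, hA, fun x => by
        convert (hs x).1 using 5 with i
        by_cases hi : s i = true <;> simp [wv, hi]⟩)
    refine ⟨A, max A (B1 + B2), hA, le_max_left _ _, fun σ x => ?_⟩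
    have key : ∀ i, (if i ∈ σ then φ i else ψ i) = wv φ ψ (fun j => decide (j ∈ σ)) i := by
      intro i
      simp [wv]
    simp only [key]
    refine ⟨hl _ x, ?_⟩
    calc _ ≤ ∑' i : ℕ, (⟪x, φ i⟫ ^ 2 + ⟪x, ψ i⟫ ^ 2) :=
          (wv_summable φ ψ s1 s2 _ x).tsum_le_tsum (wv_sq_le φ ψ _ x) ((s1 x).add (s2 x))
      _ = (∑' i : ℕ, ⟪x, φ i⟫ ^ 2) + ∑' i : ℕ, ⟪x, ψ i⟫ ^ 2 := (s1 x).tsum_add (s2 x)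
      _ ≤ (B1 + B2) * ‖x‖ ^ 2 := by linarith [(h1 x).2, (h2 x).2]
      _ ≤ _ := by gcongr; exact le_max_right _ _
end

section
/- Suppose Φ = {φ_i}_{i=1}^∞ and Ψ = {ψ_i}_{i=1}^∞ are Riesz bases for a Hilbert space H and there is a uniform constant A > 0 such that for every σ ⊆ ℕ, the family {φ_i}_{i∈σ} ∪ {ψ_i}_{i∈σ^c} is a frame with lower frame bound A. Then for every σ ⊆ ℕ, the family {φ_i}_{i∈σ} ∪ {ψ_i}_{i∈σ^c} is a Riesz basis for H. -/
open scoped RealInnerProductSpace BigOperators Classical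

/-- The weaving of two families. -/
noncomputable def weave9 {K : Type*} (φ ψ : ℕ → K) (σ : Set ℕ) (i : ℕ) : K :=
  if i ∈ σ then φ i else ψ i

section aux9

variable {K : Type*} [NormedAddCommGroup K] [InnerProductSpace ℝ K]

/-- Upper Riesz bound over finsets. -/
lemma upper9 (φ : ℕ → K) (B : ℝ)
    (h : ∀ c : ℕ →₀ ℝ, ‖∑ i ∈ c.support, c i • φ i‖ ^ 2 ≤ B * (∑ i ∈ c.support, (c i) ^ 2))
    (s : Finset ℕ) (c : ℕ → ℝ) :
    ‖∑ i ∈ s, c i • φ i‖ ^ 2 ≤ B * ∑ i ∈ s, (c i) ^ 2 := by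
  have hd : ∀ a, (if a ∈ s then c a else 0) ≠ 0 → a ∈ s := by
    intro a ha; by_contra hn; simp [hn] at ha
  set d : ℕ →₀ ℝ := Finsupp.onFinset s (fun a => if a ∈ s then c a else 0) hd with hdd
  have hsub : d.support ⊆ s := Finsupp.support_onFinset_subset
  have hval : ∀ i ∈ s, d i = c i := by
    intro i hi; simp [hdd, hi]
  have h1 : ∑ i ∈ d.support, d i • φ i = ∑ i ∈ s, c i • φ i := by
    rw [Finset.sum_subset hsub (by intro i _ hi; simp [Finsupp.notMem_support_iff.1 hi])]
    exact Finset.sum_congr rfl (fun i hi => by rw [hval i hi])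
  have h2 : ∑ i ∈ d.support, (d i) ^ 2 = ∑ i ∈ s, (c i) ^ 2 := by
    rw [Finset.sum_subset hsub (by intro i _ hi; simp [Finsupp.notMem_support_iff.1 hi])]
    exact Finset.sum_congr rfl (fun i hi => by rw [hval i hi])
  have := h d
  rwa [h1, h2] at this

lemma upper_weave9 (φ ψ : ℕ → K) (B₁ B₂ : ℝ) (hB₁ : 0 ≤ B₁) (hB₂ : 0 ≤ B₂)
    (h₁ : ∀ (s : Finset ℕ) (c : ℕ → ℝ), ‖∑ i ∈ s, c i • φ i‖ ^ 2 ≤ B₁ * ∑ i ∈ s, (c i) ^ 2)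
    (h₂ : ∀ (s : Finset ℕ) (c : ℕ → ℝ), ‖∑ i ∈ s, c i • ψ i‖ ^ 2 ≤ B₂ * ∑ i ∈ s, (c i) ^ 2)
    (σ : Set ℕ) (s : Finset ℕ) (c : ℕ → ℝ) :
    ‖∑ i ∈ s, c i • weave9 φ ψ σ i‖ ^ 2 ≤ (2 * (B₁ + B₂)) * ∑ i ∈ s, (c i) ^ 2 := by
  have hsum : ∑ i ∈ s, c i • weave9 φ ψ σ i =
      ∑ i ∈ s with i ∈ σ, c i • φ i + ∑ i ∈ s with i ∉ σ, c i • ψ i := by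
    rw [← Finset.sum_filter_add_sum_filter_not s (fun i => i ∈ σ)]
    congr 1
    · exact Finset.sum_congr rfl (fun i hi => by simp [weave9, (Finset.mem_filter.1 hi).2])
    · exact Finset.sum_congr rfl (fun i hi => by simp [weave9, (Finset.mem_filter.1 hi).2])
  have a1 := h₁ (s.filter (fun i => i ∈ σ)) c
  have a2 := h₂ (s.filter (fun i => i ∉ σ)) c
  have b1 : ∑ i ∈ s with i ∈ σ, (c i) ^ 2 ≤ ∑ i ∈ s, (c i) ^ 2 :=
    Finset.sum_le_sum_of_subset_of_nonneg (Finset.filter_subset _ _) (fun _ _ _ => sq_nonneg _)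
  have b2 : ∑ i ∈ s with i ∉ σ, (c i) ^ 2 ≤ ∑ i ∈ s, (c i) ^ 2 :=
    Finset.sum_le_sum_of_subset_of_nonneg (Finset.filter_subset _ _) (fun _ _ _ => sq_nonneg _)
  rw [hsum]
  set u := ∑ i ∈ s with i ∈ σ, c i • φ i
  set v := ∑ i ∈ s with i ∉ σ, c i • ψ i
  have t : ‖u + v‖ ≤ ‖u‖ + ‖v‖ := norm_add_le u v
  have t2 : ‖u + v‖ ^ 2 ≤ (‖u‖ + ‖v‖) ^ 2 := by gcongr
  have c1 := mul_le_mul_of_nonneg_left b1 hB₁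
  have c2 := mul_le_mul_of_nonneg_left b2 hB₂
  nlinarith [sq_nonneg (‖u‖ - ‖v‖)]

lemma bessel9 (f : ℕ → K) (D : ℝ)
    (h : ∀ (s : Finset ℕ) (c : ℕ → ℝ), ‖∑ i ∈ s, c i • f i‖ ^ 2 ≤ D * ∑ i ∈ s, (c i) ^ 2)
    (x : K) (s : Finset ℕ) : ∑ i ∈ s, ⟪x, f i⟫ ^ 2 ≤ D * ‖x‖ ^ 2 := by
  have h1 := h s (fun i => ⟪x, f i⟫)
  have h2 : ∑ i ∈ s, ⟪x, f i⟫ ^ 2 = ⟪x, ∑ i ∈ s, ⟪x, f i⟫ • f i⟫ := by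
    rw [inner_sum]
    exact Finset.sum_congr rfl (fun i _ => by rw [inner_smul_right, sq])
  have h3 := real_inner_le_norm x (∑ i ∈ s, ⟪x, f i⟫ • f i)
  rw [← h2] at h3
  set t := ∑ i ∈ s, ⟪x, f i⟫ ^ 2 with ht
  set w := ∑ i ∈ s, ⟪x, f i⟫ • f i
  have ht0 : 0 ≤ t := Finset.sum_nonneg (fun _ _ => sq_nonneg _)
  rcases ht0.eq_or_lt with h0 | h0
  · have hD := h {0} (fun _ => 1)
    simp at hD
    rw [← h0]
    have : 0 ≤ D := le_trans (by positivity) hD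
    positivity
  · have : t ^ 2 ≤ (‖x‖ * ‖w‖) ^ 2 := by gcongr
    rw [mul_pow] at this
    have h5 := mul_le_mul_of_nonneg_left h1 (sq_nonneg ‖x‖)
    nlinarith

lemma bessel_summable9 (f : ℕ → K) (D : ℝ)
    (h : ∀ (s : Finset ℕ) (c : ℕ → ℝ), ‖∑ i ∈ s, c i • f i‖ ^ 2 ≤ D * ∑ i ∈ s, (c i) ^ 2)
    (x : K) : Summable (fun i => ⟪x, f i⟫ ^ 2) ∧ ∑' i, ⟪x, f i⟫ ^ 2 ≤ D * ‖x‖ ^ 2 := by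
  have hs : Summable (fun i => ⟪x, f i⟫ ^ 2) :=
    summable_of_sum_le (fun _ => sq_nonneg _) (bessel9 f D h x)
  exact ⟨hs, hs.tsum_le_of_sum_le (bessel9 f D h x)⟩

/-- A lower frame bound on a dense set extends. -/
lemma lower_ext9 (f : ℕ → K) (D A : ℝ)
    (h : ∀ (s : Finset ℕ) (c : ℕ → ℝ), ‖∑ i ∈ s, c i • f i‖ ^ 2 ≤ D * ∑ i ∈ s, (c i) ^ 2)
    (S : Set K) (hS : Dense S) (hl : ∀ x ∈ S, A * ‖x‖ ^ 2 ≤ ∑' i, ⟪x, f i⟫ ^ 2) (x : K) :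
    A * ‖x‖ ^ 2 ≤ ∑' i, ⟪x, f i⟫ ^ 2 := by
  have key : ∀ ε : ℝ, 0 < ε → A * ‖x‖ ^ 2 ≤ (1 + ε) * ∑' i, ⟪x, f i⟫ ^ 2 := by
    intro ε hε
    have hclosed : IsClosed {y : K | A * ‖y‖ ^ 2 ≤
        (1 + ε) * (∑' i, ⟪x, f i⟫ ^ 2) + (1 + ε⁻¹) * (D * ‖y - x‖ ^ 2)} :=
      isClosed_le (by fun_prop) (by fun_prop)
    have hsub : S ⊆ {y : K | A * ‖y‖ ^ 2 ≤
        (1 + ε) * (∑' i, ⟪x, f i⟫ ^ 2) + (1 + ε⁻¹) * (D * ‖y - x‖ ^ 2)} := by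
      intro y hy
      have b := bessel_summable9 f D h
      refine (hl y hy).trans ?_
      have e : ∑' i, ⟪y, f i⟫ ^ 2 ≤
          ∑' i, ((1 + ε) * ⟪x, f i⟫ ^ 2 + (1 + ε⁻¹) * ⟪y - x, f i⟫ ^ 2) := by
        refine (b y).1.tsum_le_tsum (fun i => ?_)
          (((b x).1.mul_left _).add ((b (y - x)).1.mul_left _))
        have : ⟪y, f i⟫ = ⟪x, f i⟫ + ⟪y - x, f i⟫ := by rw [inner_sub_left]; ring
        rw [this]
        generalize ⟪x, f i⟫ = p
        generalize ⟪y - x, f i⟫ = q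
        have : (1 + ε) * p ^ 2 + (1 + ε⁻¹) * q ^ 2 - (p + q) ^ 2 = ε⁻¹ * (ε * p - q) ^ 2 := by
          field_simp
          ring
        have : 0 ≤ ε⁻¹ * (ε * p - q) ^ 2 := by positivity
        linarith
      rw [((b x).1.mul_left _).tsum_add ((b (y - x)).1.mul_left _), tsum_mul_left,
        tsum_mul_left] at e
      refine e.trans ?_
      have := (b (y - x)).2
      gcongr
    have := closure_minimal hsub hclosed (hS x)
    simpa using this
  have hlim : Filter.Tendsto (fun ε : ℝ => (1 + ε) * ∑' i, ⟪x, f i⟫ ^ 2) (nhdsWithin 0 (Set.Ioi 0))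
      (nhds ((1 + 0) * ∑' i, ⟪x, f i⟫ ^ 2)) := by
    apply Filter.Tendsto.mono_left _ nhdsWithin_le_nhds
    exact Continuous.tendsto (by fun_prop) 0
  have := ge_of_tendsto hlim (by
    filter_upwards [self_mem_nhdsWithin] with ε hε using key ε hε)
  simpa using this

/-- Existence of the biorthogonal family for a Riesz sequence. -/
lemma dual_base9 [CompleteSpace K] (ψ : ℕ → K) (A : ℝ) (hA : 0 < A)
    (h : ∀ c : ℕ →₀ ℝ, A * (∑ i ∈ c.support, (c i) ^ 2) ≤ ‖∑ i ∈ c.support, c i • ψ i‖ ^ 2) :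
    ∃ g : ℕ → K, ∀ i k, ⟪g i, ψ k⟫ = if i = k then 1 else 0 := by
  have : ∀ i, ∃ y : K, ∀ k, ⟪y, ψ k⟫ = if i = k then 1 else 0 := by
    intro i
    set M := (Submodule.span ℝ (ψ '' {k | k ≠ i})).topologicalClosure with hM
    have hMc : IsClosed (M : Set K) := Submodule.isClosed_topologicalClosure _
    have : CompleteSpace M := hMc.completeSpace_coe
    have hdist : ∀ v ∈ M, A ≤ ‖ψ i - v‖ ^ 2 := by
      intro v hv
      have hcl : IsClosed {v : K | A ≤ ‖ψ i - v‖ ^ 2} := isClosed_le (by fun_prop) (by fun_prop)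
      refine closure_minimal ?_ hcl hv
      intro v hv
      obtain ⟨l, hl, rfl⟩ := (Finsupp.mem_span_image_iff_linearCombination ℝ).1 hv
      have hli : l i = 0 := by
        by_contra hne
        exact (hl (Finsupp.mem_support_iff.2 hne)) rfl
      set c : ℕ →₀ ℝ := Finsupp.single i 1 - l with hc
      have hci : c i = 1 := by simp [hc, hli]
      have h1 := h c
      have h2 : ∑ j ∈ c.support, c j • ψ j = ψ i - Finsupp.linearCombination ℝ ψ l := by
        have : Finsupp.linearCombination ℝ ψ c = ψ i - Finsupp.linearCombination ℝ ψ l := by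
          rw [hc, map_sub]; simp
        rw [← this, Finsupp.linearCombination_apply, Finsupp.sum]
      have h3 : 1 ≤ ∑ j ∈ c.support, (c j) ^ 2 := by
        have := Finset.single_le_sum (f := fun j => (c j) ^ 2) (fun _ _ => sq_nonneg _)
          (Finsupp.mem_support_iff.2 (by rw [hci]; norm_num : c i ≠ 0))
        simpa [hci] using this
      show A ≤ _
      rw [← h2]
      nlinarith
    set p : K := M.starProjection (ψ i) with hp
    have hpM : p ∈ M := Submodule.starProjection_apply_mem _ _
    set y := ψ i - p with hy
    have hyM : ∀ v ∈ M, ⟪y, v⟫ = 0 := by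
      intro v hv
      exact Submodule.starProjection_inner_eq_zero (ψ i) v hv
    have hyy : 0 < ‖y‖ ^ 2 := hA.trans_le (hdist p hpM)
    have hyi : ⟪y, ψ i⟫ = ‖y‖ ^ 2 := by
      have : ψ i = y + p := by simp [hy]
      rw [this, inner_add_right, hyM p hpM, real_inner_self_eq_norm_sq, add_zero]
    refine ⟨(‖y‖ ^ 2)⁻¹ • y, fun k => ?_⟩
    rw [real_inner_smul_left]
    split_ifs with hk
    · subst hk
      rw [hyi, inv_mul_cancel₀ hyy.ne']
    · rw [hyM (ψ k) ?_, mul_zero]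
      exact Submodule.le_topologicalClosure _ (Submodule.subset_span ⟨k, fun e => hk e.symm, rfl⟩)
  choose g hg using this
  exact ⟨g, hg⟩

/-- Existence of the biorthogonal family for finite weavings. -/
lemma dual_finite9 (φ ψ : ℕ → K) (A : ℝ) (hA : 0 < A)
    (hl : ∀ (σ : Set ℕ) (x : K), A * ‖x‖ ^ 2 ≤ ∑' i, ⟪x, weave9 φ ψ σ i⟫ ^ 2)
    (h0 : ∃ g : ℕ → K, ∀ i k, ⟪g i, ψ k⟫ = if i = k then 1 else 0) (F : Finset ℕ) :
    ∃ g : ℕ → K, ∀ i k, ⟪g i, weave9 φ ψ (F : Set ℕ) k⟫ = if i = k then 1 else 0 := by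
  induction F using Finset.induction_on with
  | empty => simpa [weave9] using h0
  | insert j F hj ih =>
    obtain ⟨g, hg⟩ := ih
    have hw : ∀ k, k ≠ j → weave9 φ ψ ((insert j F : Finset ℕ) : Set ℕ) k
        = weave9 φ ψ (F : Set ℕ) k := by
      intro k hk; simp [weave9, hk]
    have hwj : weave9 φ ψ ((insert j F : Finset ℕ) : Set ℕ) j = φ j := by simp [weave9]
    have hne : ⟪g j, φ j⟫ ≠ 0 := by
      intro hz
      have := hl ((insert j F : Finset ℕ) : Set ℕ) (g j)
      have hall : ∀ k, ⟪g j, weave9 φ ψ ((insert j F : Finset ℕ) : Set ℕ) k⟫ = 0 := by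
        intro k
        by_cases hk : k = j
        · subst hk; rw [hwj, hz]
        · rw [hw k hk, hg, if_neg (Ne.symm hk)]
      simp only [hall] at this
      simp at this
      have hn : ‖g j‖ ^ 2 = 0 := by nlinarith [sq_nonneg ‖g j‖]
      have hgj : g j = 0 := by simpa using hn
      have := hg j j
      simp [hgj] at this
    refine ⟨fun i => if i = j then (⟪g j, φ j⟫)⁻¹ • g j
      else g i - (⟪g i, φ j⟫ * (⟪g j, φ j⟫)⁻¹) • g j, fun i k => ?_⟩
    by_cases hk : k = j
    · subst hk
      rw [hwj]
      by_cases hi : i = k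
      · subst hi
        simp [real_inner_smul_left, hne]
      · simp [hi, inner_sub_left, real_inner_smul_left, hne]
    · rw [hw k hk]
      by_cases hi : i = j
      · subst hi
        simp [real_inner_smul_left, hg, Ne.symm hk]
      · simp [hi, inner_sub_left, real_inner_smul_left, hg, Ne.symm hk]

lemma lower_riesz9 (φ ψ : ℕ → K) (A : ℝ) (hA : 0 < A)
    (hl : ∀ (σ : Set ℕ) (x : K), A * ‖x‖ ^ 2 ≤ ∑' i, ⟪x, weave9 φ ψ σ i⟫ ^ 2)
    (h0 : ∃ g : ℕ → K, ∀ i k, ⟪g i, ψ k⟫ = if i = k then 1 else 0) (σ : Set ℕ)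
    (c : ℕ →₀ ℝ) :
    A * ∑ i ∈ c.support, (c i) ^ 2 ≤ ‖∑ i ∈ c.support, c i • weave9 φ ψ σ i‖ ^ 2 := by
  set F : Finset ℕ := c.support.filter (fun i => i ∈ σ) with hF
  obtain ⟨g, hg⟩ := dual_finite9 φ ψ A hA hl h0 F
  have hw : ∑ i ∈ c.support, c i • weave9 φ ψ σ i =
      ∑ i ∈ c.support, c i • weave9 φ ψ (F : Set ℕ) i := by
    refine Finset.sum_congr rfl (fun i hi => ?_)
    have : i ∈ (F : Set ℕ) ↔ i ∈ σ := by
      rw [Finset.mem_coe, hF, Finset.mem_filter]; exact and_iff_right hi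
    simp only [weave9, this]
  rw [hw]
  set w := ∑ i ∈ c.support, c i • weave9 φ ψ (F : Set ℕ) i with hwd
  set x := ∑ i ∈ c.support, c i • g i with hx
  have hxk : ∀ k, ⟪x, weave9 φ ψ (F : Set ℕ) k⟫ = c k := by
    intro k
    rw [hx, sum_inner]
    simp only [real_inner_smul_left, hg]
    simp
    intro h; exact h.symm
  have h1 := hl F x
  simp only [hxk] at h1
  rw [tsum_eq_sum (s := c.support)
    (fun i hi => by simp [Finsupp.notMem_support_iff.1 hi])] at h1
  have h2 : ∑ i ∈ c.support, (c i) ^ 2 = ⟪x, w⟫ := by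
    rw [hwd, inner_sum]
    exact Finset.sum_congr rfl (fun i _ => by rw [inner_smul_right, hxk, sq])
  have h3 := real_inner_le_norm x w
  rw [← h2] at h3
  set N := ∑ i ∈ c.support, (c i) ^ 2
  have hN : 0 ≤ N := Finset.sum_nonneg (fun _ _ => sq_nonneg _)
  rcases hN.eq_or_lt with hz | hz
  · rw [← hz]; simp
  · have h4 : N ^ 2 ≤ (‖x‖ * ‖w‖) ^ 2 := by gcongr
    rw [mul_pow] at h4
    have h5 := mul_le_mul_of_nonneg_right h1 (sq_nonneg ‖w‖)
    have h6 := mul_le_mul_of_nonneg_left h4 hA.le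
    have h7 : N * (A * N) ≤ N * ‖w‖ ^ 2 := by nlinarith
    exact le_of_mul_le_mul_left h7 hz

lemma dense9 [CompleteSpace K] (f : ℕ → K) (A : ℝ) (hA : 0 < A)
    (hl : ∀ x : K, A * ‖x‖ ^ 2 ≤ ∑' i, ⟪x, f i⟫ ^ 2) :
    Dense (Submodule.span ℝ (Set.range f) : Set K) := by
  rw [Submodule.dense_iff_topologicalClosure_eq_top, Submodule.topologicalClosure_eq_top_iff,
    Submodule.eq_bot_iff]
  intro x hx
  have h1 : ∀ i, ⟪x, f i⟫ = 0 := fun i =>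
    Submodule.inner_left_of_mem_orthogonal (Submodule.subset_span (Set.mem_range_self i)) hx
  have := hl x
  simp only [h1] at this
  simp at this
  have hn : ‖x‖ ^ 2 = 0 := by nlinarith [sq_nonneg ‖x‖]
  simpa using hn

end aux9

/-- If `φ` and `ψ` are Riesz bases and every weaving is a frame with uniform
lower frame bound `A`, then every weaving is in fact a Riesz basis for `H`. -/
theorem stmt_9 {H : Type*} [NormedAddCommGroup H] [InnerProductSpace ℝ H]
    (φ ψ : ℕ → H) (A : ℝ) (hA : 0 < A)
    (hφRiesz : ∃ A' B' : ℝ, 0 < A' ∧ A' ≤ B' ∧ ∀ c : ℕ →₀ ℝ,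
      A' * (∑ i ∈ c.support, (c i) ^ 2) ≤ ‖∑ i ∈ c.support, c i • φ i‖ ^ 2 ∧
      ‖∑ i ∈ c.support, c i • φ i‖ ^ 2 ≤ B' * (∑ i ∈ c.support, (c i) ^ 2))
    (hφdense : Dense (Submodule.span ℝ (Set.range φ) : Set H))
    (hψRiesz : ∃ A' B' : ℝ, 0 < A' ∧ A' ≤ B' ∧ ∀ c : ℕ →₀ ℝ,
      A' * (∑ i ∈ c.support, (c i) ^ 2) ≤ ‖∑ i ∈ c.support, c i • ψ i‖ ^ 2 ∧
      ‖∑ i ∈ c.support, c i • ψ i‖ ^ 2 ≤ B' * (∑ i ∈ c.support, (c i) ^ 2))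
    (hψdense : Dense (Submodule.span ℝ (Set.range ψ) : Set H))
    (hlower : ∀ σ : Set ℕ, ∀ x : H,
      A * ‖x‖ ^ 2 ≤ ∑' i : ℕ, ⟪x, if i ∈ σ then φ i else ψ i⟫ ^ 2)
    (hupper : ∀ σ : Set ℕ, ∃ B : ℝ, 0 < B ∧ ∀ x : H,
      (∑' i : ℕ, ⟪x, if i ∈ σ then φ i else ψ i⟫ ^ 2) ≤ B * ‖x‖ ^ 2) :
    ∀ σ : Set ℕ,
      (∃ C D : ℝ, 0 < C ∧ C ≤ D ∧ ∀ c : ℕ →₀ ℝ,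
        C * (∑ i ∈ c.support, (c i) ^ 2) ≤
          ‖∑ i ∈ c.support, c i • (if i ∈ σ then φ i else ψ i)‖ ^ 2 ∧
        ‖∑ i ∈ c.support, c i • (if i ∈ σ then φ i else ψ i)‖ ^ 2 ≤
          D * (∑ i ∈ c.support, (c i) ^ 2)) ∧
      Dense (Submodule.span ℝ
        (Set.range fun i : ℕ => if i ∈ σ then φ i else ψ i) : Set H) := by
  intro σ
  obtain ⟨A₁, B₁, hA₁, hAB₁, h₁⟩ := hφRiesz
  obtain ⟨A₂, B₂, hA₂, hAB₂, h₂⟩ := hψRiesz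
  have hB₁ : 0 ≤ B₁ := by linarith
  have hB₂ : 0 ≤ B₂ := by linarith
  have u₁ := upper9 φ B₁ (fun c => (h₁ c).2)
  have u₂ := upper9 ψ B₂ (fun c => (h₂ c).2)
  have u := upper_weave9 φ ψ B₁ B₂ hB₁ hB₂ u₁ u₂
  let ι : H →ₗᵢ[ℝ] UniformSpace.Completion H := UniformSpace.Completion.toComplₗᵢ
  have hι : DenseRange ι := UniformSpace.Completion.denseRange_coe
  have hsum : ∀ (f : ℕ → H) (s : Finset ℕ) (c : ℕ → ℝ),
      ‖∑ i ∈ s, c i • ι (f i)‖ = ‖∑ i ∈ s, c i • f i‖ := by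
    intro f s c
    rw [← ι.norm_map (∑ i ∈ s, c i • f i), map_sum]
    simp only [map_smul]
  have hwv : ∀ (τ : Set ℕ) (i : ℕ),
      weave9 (fun i => ι (φ i)) (fun i => ι (ψ i)) τ i = ι (weave9 φ ψ τ i) := by
    intro τ i
    simp only [weave9]
    split_ifs <;> rfl
  have hl : ∀ (τ : Set ℕ) (x : UniformSpace.Completion H), A * ‖x‖ ^ 2 ≤
      ∑' i, ⟪x, weave9 (fun i => ι (φ i)) (fun i => ι (ψ i)) τ i⟫ ^ 2 := by
    intro τ
    refine lower_ext9 _ (2 * (B₁ + B₂)) A ?_ (Set.range ι) hι ?_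
    · intro s c
      simp only [hwv]
      rw [hsum]
      exact u τ s c
    · rintro _ ⟨x, rfl⟩
      simp only [hwv, ι.norm_map, ι.inner_map_map]
      exact hlower τ x
  have h0 := dual_base9 (fun i => ι (ψ i)) A₂ hA₂ (fun c => by rw [hsum]; exact (h₂ c).1)
  refine ⟨⟨A, A + 2 * (B₁ + B₂), hA, by linarith, fun c => ⟨?_, ?_⟩⟩, ?_⟩
  · have := lower_riesz9 _ _ A hA hl h0 σ c
    simp only [hwv] at this
    rw [hsum] at this
    exact this
  · refine (u σ c.support c).trans ?_
    have : 0 ≤ ∑ i ∈ c.support, (c i) ^ 2 := Finset.sum_nonneg (fun _ _ => sq_nonneg _)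
    nlinarith
  · have hd := dense9 _ A hA (hl σ)
    have hr : (Submodule.span ℝ (Set.range
        (weave9 (fun i => ι (φ i)) (fun i => ι (ψ i)) σ)) : Set (UniformSpace.Completion H)) =
        ι '' (Submodule.span ℝ (Set.range (weave9 φ ψ σ)) : Set H) := by
      have : Set.range (weave9 (fun i => ι (φ i)) (fun i => ι (ψ i)) σ) =
          ι.toLinearMap '' Set.range (weave9 φ ψ σ) := by
        rw [← Set.range_comp]
        congr 1
        funext i
        exact hwv σ i
      rw [this, Submodule.span_image]
      rfl
    rw [hr] at hd
    have : Dense (Submodule.span ℝ (Set.range (weave9 φ ψ σ)) : Set H) := by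
      intro x
      rw [ι.isometry.isUniformInducing.isInducing.closure_eq_preimage_closure_image]
      exact hd (ι x)
    exact this
end

section
/- Let Φ = {φ_i}_{i=1}^∞ be a Riesz basis and Ψ = {ψ_i}_{i=1}^∞ a frame for a Hilbert space H. If Φ and Ψ are woven, then Ψ is a Riesz basis. -/
open scoped RealInnerProductSpace BigOperators Classical

open UniformSpace in
/-- Lower frame bounds force summability, so the upper bound is an honest Bessel bound. -/
theorem aux_bessel {H : Type*} [NormedAddCommGroup H] [InnerProductSpace ℝ H]
    (f : ℕ → H) (A B : ℝ) (hA : 0 < A)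
    (h : ∀ x : H, A * ‖x‖ ^ 2 ≤ (∑' i : ℕ, ⟪x, f i⟫ ^ 2) ∧
      (∑' i : ℕ, ⟪x, f i⟫ ^ 2) ≤ B * ‖x‖ ^ 2) (x : H) (F : Finset ℕ) :
    ∑ i ∈ F, ⟪x, f i⟫ ^ 2 ≤ B * ‖x‖ ^ 2 := by
  by_cases hx : x = 0
  · subst hx; simp
  have hs : Summable (fun i => ⟪x, f i⟫ ^ 2) := by
    by_contra hn
    have h1 := (h x).1
    rw [tsum_eq_zero_of_not_summable hn] at h1
    have : 0 < ‖x‖ := norm_pos_iff.2 hx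
    have : 0 < A * ‖x‖ ^ 2 := by positivity
    linarith
  exact (hs.sum_le_tsum F (fun i _ => sq_nonneg _)).trans (h x).2

open UniformSpace in
theorem aux_bessel_compl {H : Type*} [NormedAddCommGroup H] [InnerProductSpace ℝ H]
    (f : ℕ → H) (B : ℝ)
    (h : ∀ (x : H) (F : Finset ℕ), ∑ i ∈ F, ⟪x, f i⟫ ^ 2 ≤ B * ‖x‖ ^ 2)
    (x : Completion H) (F : Finset ℕ) :
    ∑ i ∈ F, ⟪x, (f i : Completion H)⟫ ^ 2 ≤ B * ‖x‖ ^ 2 := by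
  induction x using Completion.induction_on with
  | hp => exact isClosed_le (by fun_prop) (by fun_prop)
  | ih a => simpa only [Completion.inner_coe, Completion.norm_coe] using h a F

open UniformSpace in
theorem aux_lower {H : Type*} [NormedAddCommGroup H] [InnerProductSpace ℝ H]
    (f : ℕ → H) (A B : ℝ) (hA : 0 < A) (hAB : A ≤ B)
    (h : ∀ x : H, A * ‖x‖ ^ 2 ≤ (∑' i : ℕ, ⟪x, f i⟫ ^ 2) ∧
      (∑' i : ℕ, ⟪x, f i⟫ ^ 2) ≤ B * ‖x‖ ^ 2) (s : Finset ℕ)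
    (x : Completion H) (hx : ∀ i ∉ s, ⟪x, (f i : Completion H)⟫ = 0) :
    A * ‖x‖ ^ 2 ≤ ∑ i ∈ s, ⟪x, (f i : Completion H)⟫ ^ 2 := by
  have hB : 0 ≤ B := hA.le.trans hAB
  have key : ∀ y : Completion H, A * ‖y‖ ^ 2 ≤
      ∑ i ∈ s, ⟪y, (f i : Completion H)⟫ ^ 2 + B * ‖y - x‖ ^ 2 := by
    intro y
    induction y using Completion.induction_on with
    | hp => exact isClosed_le (by fun_prop) (by fun_prop)
    | ih a =>
      rw [Completion.norm_coe]
      refine (h a).1.trans (Real.tsum_le_of_sum_le (fun i => sq_nonneg _) fun F => ?_)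
      have hb := aux_bessel_compl f B (aux_bessel f A B hA h) ((a : Completion H) - x) (F \ s)
      have h1 : ∑ i ∈ F \ s, ⟪(a : Completion H) - x, (f i : Completion H)⟫ ^ 2
          = ∑ i ∈ F \ s, ⟪a, f i⟫ ^ 2 := by
        refine Finset.sum_congr rfl fun i hi => ?_
        rw [inner_sub_left, hx i (Finset.mem_sdiff.1 hi).2, sub_zero, Completion.inner_coe]
      rw [h1] at hb
      have h2 : ∑ i ∈ F ∩ s, ⟪a, f i⟫ ^ 2 ≤ ∑ i ∈ s, ⟪a, f i⟫ ^ 2 :=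
        Finset.sum_le_sum_of_subset_of_nonneg Finset.inter_subset_right
          (fun i _ _ => sq_nonneg _)
      have h3 := Finset.sum_inter_add_sum_sdiff F s (fun i => ⟪a, f i⟫ ^ 2)
      simp only [Completion.inner_coe]
      linarith
  simpa using key x

/-- Orthogonal vectors exist in the required dimension. -/
theorem aux_surj {K : Type*} [NormedAddCommGroup K] [InnerProductSpace ℝ K] [CompleteSpace K]
    (φ : ℕ → K) (A' : ℝ) (hA' : 0 < A')
    (hφ : ∀ c : ℕ →₀ ℝ,
      A' * (∑ i ∈ c.support, (c i) ^ 2) ≤ ‖∑ i ∈ c.support, c i • φ i‖ ^ 2)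
    (s : Finset ℕ) (ψ : ℕ → K) (A : ℝ) (hA : 0 < A)
    (hl : ∀ x : K, (∀ i ∉ s, ⟪x, φ i⟫ = 0) → A * ‖x‖ ^ 2 ≤ ∑ i ∈ s, ⟪x, ψ i⟫ ^ 2)
    (c : ℕ → ℝ) :
    ∃ x : K, (∀ i ∉ s, ⟪x, φ i⟫ = 0) ∧ ∀ i ∈ s, ⟪x, ψ i⟫ = c i := by
  set V : Submodule ℝ K := (Submodule.span ℝ (φ '' (s : Set ℕ)ᶜ)).topologicalClosure with hV
  have : CompleteSpace V := Submodule.isClosed_topologicalClosure _ |>.completeSpace_coe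
  have hperp : ∀ x ∈ Vᗮ, ∀ i ∉ s, ⟪x, φ i⟫ = 0 := by
    intro x hx i hi
    rw [real_inner_comm]
    exact hx _ (Submodule.le_topologicalClosure _ (Submodule.subset_span ⟨i, by simpa using hi, rfl⟩))
  -- the finite synthesis map
  let S : (s → ℝ) →ₗ[ℝ] K := Fintype.linearCombination ℝ (fun i : s => φ i)
  let P : K →ₗ[ℝ] Vᗮ := (Vᗮ.orthogonalProjectionOnto : K →L[ℝ] Vᗮ).toLinearMap
  let T : Vᗮ →ₗ[ℝ] (s → ℝ) :=
    { toFun := fun x i => ⟪(x : K), ψ i⟫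
      map_add' := by intro x y; ext i; simp [inner_add_left]
      map_smul' := by intro r x; ext i; simp [inner_smul_left] }
  have hT : Function.Injective T := by
    rw [injective_iff_map_eq_zero]
    intro x hx
    have h1 := hl x (hperp x x.2)
    have h2 : ∑ i ∈ s, ⟪(x : K), ψ i⟫ ^ 2 = 0 := by
      refine Finset.sum_eq_zero fun i hi => ?_
      have := congrFun hx ⟨i, hi⟩
      change ⟪(x : K), ψ i⟫ = 0 at this
      rw [this]; norm_num
    rw [h2] at h1
    have h3 : ‖(x : K)‖ ^ 2 ≤ 0 := by
      by_contra h; push Not at h; nlinarith [mul_pos hA h]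
    have h4 : ‖(x : K)‖ = 0 := by nlinarith [norm_nonneg (x : K)]
    exact Subtype.ext (norm_eq_zero.1 h4)
  have hP : Function.Injective (P ∘ₗ S) := by
    rw [injective_iff_map_eq_zero]
    intro d hd
    have hmem : S d ∈ V := by
      have h0 : Vᗮ.orthogonalProjectionOnto (S d) = 0 := hd
      rw [Submodule.orthogonalProjectionOnto_eq_zero_iff, Submodule.orthogonal_orthogonal] at h0
      exact h0
    have hcl : ∀ v ∈ (Submodule.span ℝ (φ '' (s : Set ℕ)ᶜ)),
        A' * ∑ i, d i ^ 2 ≤ ‖S d - v‖ ^ 2 := by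
      intro v hv
      rw [Finsupp.mem_span_image_iff_linearCombination] at hv
      obtain ⟨l, hl1, rfl⟩ := hv
      have hls : ∀ i ∈ s, l i = 0 := by
        intro i hi
        by_contra hne
        have := (Finsupp.mem_supported ℝ l).1 hl1 (by simpa using hne : i ∈ (l.support : Set ℕ))
        exact this hi
      let e : ℕ →₀ ℝ := Finsupp.onFinset s (fun i => if hi : i ∈ s then d ⟨i, hi⟩ else 0)
        (by intro i hi; by_contra h; simp [h] at hi)
      have he : ∀ i : s, e i = d i := by intro i; simp [e]
      have hSe : S d = Finsupp.linearCombination ℝ φ e := by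
        rw [Finsupp.linearCombination_apply, Finsupp.sum_of_support_subset e
          (Finsupp.support_onFinset_subset) _ (by simp)]
        rw [← Finset.sum_coe_sort s]
        simp only [he]
        rfl
      have hk := hφ (e - l)
      have h1 : ∑ i ∈ (e - l).support, (e - l) i • φ i
          = S d - Finsupp.linearCombination ℝ φ l := by
        rw [hSe, ← map_sub]; rfl
      rw [h1] at hk
      refine le_trans (mul_le_mul_of_nonneg_left ?_ hA'.le) hk
      have h2 : ∑ i, d i ^ 2 = ∑ i ∈ s, (e - l) i ^ 2 := by
        rw [← Finset.sum_coe_sort s]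
        refine Finset.sum_congr rfl fun i _ => ?_
        simp [he, hls i i.2]
      rw [h2]
      have h3 : ∑ i ∈ (e - l).support, (e - l) i ^ 2
          = ∑ i ∈ (e - l).support ∪ s, (e - l) i ^ 2 := by
        refine Finset.sum_subset Finset.subset_union_left fun i _ hi => ?_
        rw [Finsupp.notMem_support_iff.1 hi]; norm_num
      rw [h3]
      exact Finset.sum_le_sum_of_subset_of_nonneg Finset.subset_union_right
          (fun i _ _ => sq_nonneg _)
    have hfin : A' * ∑ i, d i ^ 2 ≤ ‖S d - S d‖ ^ 2 := by
      have hc : IsClosed {v : K | A' * ∑ i, d i ^ 2 ≤ ‖S d - v‖ ^ 2} :=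
        isClosed_le (by fun_prop) (by fun_prop)
      exact closure_minimal (fun v hv => hcl v hv) hc hmem
    have hz : ∑ i, d i ^ 2 ≤ 0 := by
      by_contra h; push Not at h
      have := mul_pos hA' h
      rw [sub_self, norm_zero] at hfin
      have h0 : (0 : ℝ) ^ 2 = 0 := by norm_num
      linarith
    have hz' : ∑ i, d i ^ 2 = 0 := le_antisymm hz (Finset.sum_nonneg fun i _ => sq_nonneg _)
    rw [Finset.sum_eq_zero_iff_of_nonneg (fun i _ => sq_nonneg _)] at hz'
    ext i
    simpa using hz' i (Finset.mem_univ _)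
  have hTP : Function.Surjective (T ∘ₗ (P ∘ₗ S)) :=
    LinearMap.injective_iff_surjective.1 (by
      rw [LinearMap.coe_comp]; exact hT.comp hP)
  obtain ⟨d, hd⟩ := hTP (fun i => c i)
  refine ⟨P (S d), hperp _ (P (S d)).2, fun i hi => ?_⟩
  exact congrFun hd ⟨i, hi⟩

/-- If `Φ` is a Riesz basis, `Ψ` is a frame, and `Φ` and `Ψ` are woven, then `Ψ`
must in fact be a Riesz basis. -/
theorem stmt_10 {H : Type*} [NormedAddCommGroup H] [InnerProductSpace ℝ H]
    (φ ψ : ℕ → H)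
    (hφRiesz : ∃ A' B' : ℝ, 0 < A' ∧ A' ≤ B' ∧ ∀ c : ℕ →₀ ℝ,
      A' * (∑ i ∈ c.support, (c i) ^ 2) ≤ ‖∑ i ∈ c.support, c i • φ i‖ ^ 2 ∧
      ‖∑ i ∈ c.support, c i • φ i‖ ^ 2 ≤ B' * (∑ i ∈ c.support, (c i) ^ 2))
    (hφdense : Dense (Submodule.span ℝ (Set.range φ) : Set H))
    (hψframe : ∃ A B : ℝ, 0 < A ∧ A ≤ B ∧ ∀ x : H,
      A * ‖x‖ ^ 2 ≤ (∑' i : ℕ, ⟪x, ψ i⟫ ^ 2) ∧ (∑' i : ℕ, ⟪x, ψ i⟫ ^ 2) ≤ B * ‖x‖ ^ 2)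
    (hwoven : ∃ A B : ℝ, 0 < A ∧ A ≤ B ∧ ∀ σ : Set ℕ, ∀ x : H,
      A * ‖x‖ ^ 2 ≤ (∑' i : ℕ, ⟪x, if i ∈ σ then φ i else ψ i⟫ ^ 2) ∧
      (∑' i : ℕ, ⟪x, if i ∈ σ then φ i else ψ i⟫ ^ 2) ≤ B * ‖x‖ ^ 2) :
    (∃ C D : ℝ, 0 < C ∧ C ≤ D ∧ ∀ c : ℕ →₀ ℝ,
      C * (∑ i ∈ c.support, (c i) ^ 2) ≤ ‖∑ i ∈ c.support, c i • ψ i‖ ^ 2 ∧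
      ‖∑ i ∈ c.support, c i • ψ i‖ ^ 2 ≤ D * (∑ i ∈ c.support, (c i) ^ 2)) ∧
    Dense (Submodule.span ℝ (Set.range ψ) : Set H) := by
  obtain ⟨A', B', hA', hAB', hφ⟩ := hφRiesz
  obtain ⟨A, B, hA, hAB, hw⟩ := hwoven
  obtain ⟨A₂, B₂, hA₂, hAB₂, hψ⟩ := hψframe
  refine ⟨⟨A, max A B₂, hA, le_max_left _ _, fun c => ⟨?_, ?_⟩⟩, ?_⟩
  · let s := c.support
    have hlow : ∀ x : UniformSpace.Completion H,
        (∀ i ∉ s, ⟪x, (φ i : UniformSpace.Completion H)⟫ = 0) →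
        A * ‖x‖ ^ 2 ≤ ∑ i ∈ s, ⟪x, (ψ i : UniformSpace.Completion H)⟫ ^ 2 := by
      intro x hx
      have := aux_lower (fun i => if i ∈ ((s : Set ℕ)ᶜ) then φ i else ψ i) A B hA hAB
        (fun x => by convert hw ((s : Set ℕ)ᶜ) x) s x (by
          intro i hi
          have : i ∈ ((s : Set ℕ)ᶜ) := by simpa using hi
          simp only [this, if_true]
          exact hx i hi)
      refine this.trans (le_of_eq (Finset.sum_congr rfl fun i hi => ?_))
      have : i ∉ ((s : Set ℕ)ᶜ) := by simpa using hi
      simp only [this, if_false]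
    have hφc : ∀ c : ℕ →₀ ℝ, A' * (∑ i ∈ c.support, (c i) ^ 2) ≤
        ‖∑ i ∈ c.support, c i • (φ i : UniformSpace.Completion H)‖ ^ 2 := by
      intro c
      have h := (hφ c).1
      rw [← UniformSpace.Completion.norm_coe] at h
      have h2 : ((∑ i ∈ c.support, c i • φ i : H) : UniformSpace.Completion H)
          = ∑ i ∈ c.support, c i • (φ i : UniformSpace.Completion H) := by
        change UniformSpace.Completion.toComplₗᵢ (𝕜 := ℝ) _ = _
        simp
      rwa [h2] at h
    obtain ⟨x, hx1, hx2⟩ := aux_surj (fun i => (φ i : UniformSpace.Completion H)) A' hA' hφc s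
      (fun i => (ψ i : UniformSpace.Completion H)) A hA hlow c
    have h1 := hlow x hx1
    have h2 : ((∑ i ∈ c.support, c i • ψ i : H) : UniformSpace.Completion H)
          = ∑ i ∈ c.support, c i • (ψ i : UniformSpace.Completion H) := by
        change UniformSpace.Completion.toComplₗᵢ (𝕜 := ℝ) _ = _
        simp
    rw [← UniformSpace.Completion.norm_coe, h2]
    have h3 : ∑ i ∈ c.support, c i ^ 2
        = ⟪x, ∑ i ∈ c.support, c i • (ψ i : UniformSpace.Completion H)⟫ := by
      rw [inner_sum]
      refine Finset.sum_congr rfl fun i hi => ?_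
      rw [inner_smul_right, hx2 i hi, sq]
    have h4 : ∑ i ∈ s, ⟪x, (ψ i : UniformSpace.Completion H)⟫ ^ 2 = ∑ i ∈ c.support, c i ^ 2 :=
      Finset.sum_congr rfl fun i hi => by rw [hx2 i hi]
    rw [h4] at h1
    have h5 := real_inner_le_norm x (∑ i ∈ c.support, c i • (ψ i : UniformSpace.Completion H))
    rw [← h3] at h5
    have h6 : 0 ≤ ∑ i ∈ c.support, c i ^ 2 := Finset.sum_nonneg fun i _ => sq_nonneg _
    generalize ∑ i ∈ c.support, c i ^ 2 = q at *
    generalize ‖∑ i ∈ c.support, c i • (ψ i : UniformSpace.Completion H)‖ = n at *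
    have h7 : q * (A * q) ≤ q * n ^ 2 := by
      calc q * (A * q) = A * q ^ 2 := by ring
        _ ≤ A * (‖x‖ * n) ^ 2 := by gcongr
        _ = (A * ‖x‖ ^ 2) * n ^ 2 := by ring
        _ ≤ q * n ^ 2 := by gcongr
    rcases h6.eq_or_lt with h0 | h0
    · rw [← h0]; simp; positivity
    · exact le_of_mul_le_mul_left h7 h0
  · set x := ∑ i ∈ c.support, c i • ψ i with hx
    have h1 := aux_bessel ψ A₂ B₂ hA₂ hψ x c.support
    have h2 : ‖x‖ ^ 2 = ∑ i ∈ c.support, c i * ⟪x, ψ i⟫ := by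
      rw [← real_inner_self_eq_norm_sq]
      conv_lhs => rw [hx, inner_sum]
      refine Finset.sum_congr rfl fun i _ => ?_
      rw [inner_smul_right]
    have h3 := Finset.sum_mul_sq_le_sq_mul_sq c.support (fun i => c i) (fun i => ⟪x, ψ i⟫)
    rw [← h2] at h3
    have h6 : 0 ≤ ∑ i ∈ c.support, c i ^ 2 := Finset.sum_nonneg fun i _ => sq_nonneg _
    have h4 : ‖x‖ ^ 2 ≤ B₂ * ∑ i ∈ c.support, c i ^ 2 := by
      generalize ∑ i ∈ c.support, c i ^ 2 = q at *
      have hB : 0 < B₂ := by linarith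
      rcases (sq_nonneg ‖x‖).eq_or_lt with h0 | h0
      · rw [← h0]; positivity
      · have h7 : ‖x‖ ^ 2 * ‖x‖ ^ 2 ≤ ‖x‖ ^ 2 * (B₂ * q) := by
          calc ‖x‖ ^ 2 * ‖x‖ ^ 2 = (‖x‖ ^ 2) ^ 2 := by ring
            _ ≤ _ := h3
            _ ≤ q * (B₂ * ‖x‖ ^ 2) := by gcongr
            _ = _ := by ring
        exact le_of_mul_le_mul_left h7 h0
    exact h4.trans (mul_le_mul_of_nonneg_right (le_max_right _ _) h6)
  · rw [UniformSpace.Completion.isDenseInducing_coe.isInducing.dense_iff]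
    intro x
    let j : H →ₗ[ℝ] UniformSpace.Completion H :=
      (UniformSpace.Completion.toComplₗᵢ (𝕜 := ℝ) (E := H)).toLinearMap
    let W := (Submodule.span ℝ (Set.range ψ)).map j
    have hW : W.topologicalClosure = ⊤ := by
      rw [Submodule.topologicalClosure_eq_top_iff, Submodule.eq_bot_iff]
      intro y hy
      have hy0 : ∀ i ∉ (∅ : Finset ℕ), ⟪y, (ψ i : UniformSpace.Completion H)⟫ = 0 := by
        intro i _
        rw [real_inner_comm]
        exact hy _ ⟨ψ i, Submodule.subset_span ⟨i, rfl⟩, rfl⟩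
      have h1 := aux_lower ψ A₂ B₂ hA₂ hAB₂ hψ ∅ y hy0
      rw [Finset.sum_empty] at h1
      by_contra hne
      have : 0 < ‖y‖ := norm_pos_iff.2 hne
      have : 0 < A₂ * ‖y‖ ^ 2 := by positivity
      linarith
    have : (x : UniformSpace.Completion H) ∈ W.topologicalClosure := by rw [hW]; trivial
    exact this
end
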